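/- Let n ≥ 1, let 𝓛 be a fixed real symmetric positive definite n×n matrix, let γ > 0, let S : ℝ → (n×n real matrices) be continuous, and let 𝓛̂ : ℝ → (n×n real matrices) be differentiable with 𝓛̂(t) symmetric positive definite for every t and satisfying the natural adaptation law 𝓛̂'(t) = (1/γ) 𝓛̂(t) S(t) 𝓛̂(t). Then d/dt D_F(𝓛 ‖ 𝓛̂(t)) = (1/γ) tr( S(t) · (𝓛̂(t) − 𝓛) ). -/

import Mathlib

theorem aux_det {n : ℕ} (A : ℝ → Matrix (Fin n) (Fin n) ℝ) (A' : Matrix (Fin n) (Fin n) ℝ) (t : ℝ)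
    (h : ∀ i j, HasDerivAt (fun s => A s i j) (A' i j) t) :
    HasDerivAt (fun s => (A s).det) (((A t).adjugate * A').trace) t := by
  have h1 : HasDerivAt (fun s => (A s).det)
      (∑ σ : Equiv.Perm (Fin n), ((Equiv.Perm.sign σ : ℤ) : ℝ) *
        ∑ i, (∏ j ∈ Finset.univ.erase i, A t (σ j) j) • A' (σ i) i) t := by
    simp only [Matrix.det_apply']
    refine HasDerivAt.fun_sum fun σ _ => HasDerivAt.const_mul _ ?_
    exact HasDerivAt.fun_finsetProd fun i _ => h _ _
  convert h1 using 1
  have h2 : ∀ i, ((A t).adjugate * A') i i = ((A t).updateCol i (fun k => A' k i)).det := by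
    intro i
    rw [← Matrix.cramer_apply, Matrix.cramer_eq_adjugate_mulVec]
    rfl
  simp only [Matrix.trace, Matrix.diag_apply, h2, Matrix.det_apply', Finset.mul_sum]
  rw [Finset.sum_comm]
  refine Finset.sum_congr rfl fun σ _ => Finset.sum_congr rfl fun i _ => ?_
  rw [← Finset.prod_erase_mul _ _ (Finset.mem_univ i)]
  simp only [Matrix.updateCol_self, smul_eq_mul]
  congr 2
  refine Finset.prod_congr rfl fun j hj => ?_
  rw [Matrix.updateCol_ne (Finset.ne_of_mem_erase hj)]

section
attribute [local instance] Matrix.linftyOpNormedRing Matrix.linftyOpNormedAlgebra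

theorem aux_inv {n : ℕ} (A : ℝ → Matrix (Fin n) (Fin n) ℝ) (A' L : Matrix (Fin n) (Fin n) ℝ) (t : ℝ)
    (hu : IsUnit (A t))
    (h : ∀ i j, HasDerivAt (fun s => A s i j) (A' i j) t) :
    HasDerivAt (fun s => ((A s)⁻¹ * L).trace) (-((A t)⁻¹ * A' * (A t)⁻¹ * L).trace) t := by
  have hA : HasDerivAt A A' t := by
    refine hasDerivAt_pi.2 fun i => hasDerivAt_pi.2 fun j => h i j
  obtain ⟨u, hu⟩ := hu
  have h1 := hasFDerivAt_ringInverse (𝕜 := ℝ) u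
  rw [hu] at h1
  have h2 := h1.comp_hasDerivAt t hA
  let T : Matrix (Fin n) (Fin n) ℝ →L[ℝ] ℝ :=
    LinearMap.toContinuousLinearMap
      ((Matrix.traceLinearMap (Fin n) ℝ ℝ).comp (LinearMap.mulRight ℝ L))
  have h3 := T.hasFDerivAt.comp_hasDerivAt t h2
  have hui : ((u⁻¹ : (Matrix (Fin n) (Fin n) ℝ)ˣ) : Matrix (Fin n) (Fin n) ℝ) = (A t)⁻¹ := by
    rw [← hu, Matrix.coe_units_inv]
  have ef : (fun s => ((A s)⁻¹ * L).trace) = T ∘ (Ring.inverse ∘ A) := by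
    funext s
    simp [T, Matrix.nonsing_inv_eq_ringInverse]
  have ed : -((A t)⁻¹ * A' * (A t)⁻¹ * L).trace =
      T ((-((ContinuousLinearMap.mulLeftRight ℝ (Matrix (Fin n) (Fin n) ℝ)) ↑u⁻¹) ↑u⁻¹) A') := by
    simp [T, hui]
  rw [ef, ed]
  exact h3
end


/-- Let `𝓛` be a fixed real symmetric positive definite `n × n` matrix
(`n ≥ 1`), `γ > 0`, `S : ℝ → Matrix` continuous (entrywise), and `𝓛̂ : ℝ → Matrix`
differentiable with `𝓛̂ t` symmetric positive definite for every `t`, satisfying the natural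
adaptation law `𝓛̂'(t) = (1/γ) 𝓛̂(t) S(t) 𝓛̂(t)`.  Then
`d/dt D_F(𝓛 ‖ 𝓛̂ t) = (1/γ) tr(S(t) (𝓛̂(t) − 𝓛))`. -/
theorem bregman_logdet_deriv_natural_adaptation_law
    (n : ℕ) (hn : 1 ≤ n)
    (L : Matrix (Fin n) (Fin n) ℝ) (hL : L.PosDef)
    (γ : ℝ) (hγ : 0 < γ)
    (S : ℝ → Matrix (Fin n) (Fin n) ℝ)
    (hS : ∀ i j, Continuous fun t => S t i j)
    (Lhat : ℝ → Matrix (Fin n) (Fin n) ℝ)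
    (hpd : ∀ t, (Lhat t).PosDef)
    (hlaw : ∀ t, ∀ i j,
      HasDerivAt (fun s => Lhat s i j) (((1 / γ) • (Lhat t * S t * Lhat t)) i j) t) :
    ∀ t, HasDerivAt
      (fun s => Real.log ((Lhat s).det / L.det) + ((Lhat s)⁻¹ * L).trace - (n : ℝ))
      ((1 / γ) * (S t * (Lhat t - L)).trace) t := by
  intro t
  have hdL := hL.det_pos
  have hd := (hpd t).det_pos
  have hu : IsUnit (Lhat t).det := hd.ne'.isUnit
  have h1 := aux_det Lhat _ t (hlaw t)
  have h2 := aux_inv Lhat _ L t ((Matrix.isUnit_iff_isUnit_det _).2 hu) (hlaw t)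
  have h3 := (h1.div_const L.det).log (div_pos hd hdL).ne'
  refine ((h3.add h2).sub_const (n : ℝ)).congr_deriv ?_
  have e1 : (Lhat t).adjugate * ((1 / γ) • (Lhat t * S t * Lhat t))
      = ((1 / γ) * (Lhat t).det) • (S t * Lhat t) := by
    rw [Matrix.mul_smul, Matrix.mul_assoc (Lhat t), ← Matrix.mul_assoc (Lhat t).adjugate,
      Matrix.adjugate_mul, Matrix.smul_mul, Matrix.one_mul, smul_smul]
  have e2 : (Lhat t)⁻¹ * ((1 / γ) • (Lhat t * S t * Lhat t)) * (Lhat t)⁻¹ * L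
      = (1 / γ) • (S t * L) := by
    rw [Matrix.mul_smul, Matrix.mul_assoc (Lhat t), ← Matrix.mul_assoc (Lhat t)⁻¹,
      Matrix.nonsing_inv_mul _ hu, Matrix.one_mul, Matrix.smul_mul, Matrix.smul_mul,
      Matrix.mul_assoc (S t), Matrix.mul_nonsing_inv _ hu, Matrix.mul_one]
  rw [e1, e2, Matrix.mul_sub, Matrix.trace_sub, Matrix.trace_smul, Matrix.trace_smul]
  simp only [smul_eq_mul]
  field_simp
  ring
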